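/- For the standard Gaussian measure γ on ℝ^d, every p ∈ [2,∞), and every Schwartz function f with ∫ f dγ = 0, one has ‖f‖_{L^p(γ)} ≤ √(p-1) · ‖∇f‖_{L^p(γ)}, where ‖∇f‖_{L^p(γ)} = (∫ ‖∇f(x)‖^p γ(dx))^{1/p}. -/

import Mathlib

open MeasureTheory Real Set
open scoped ENNReal

/-- The standard Gaussian probability measure on `ℝ^d`. -/
noncomputable def stdGaussian (d : ℕ) : Measure (EuclideanSpace ℝ (Fin d)) :=
  (volume : Measure (EuclideanSpace ℝ (Fin d))).withDensity
    (fun x => ENNReal.ofReal ((2 * π) ^ (-(d : ℝ) / 2) * Real.exp (-‖x‖ ^ 2 / 2)))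

/-!
Rotating a pair `(x, y)` of independent standard Gaussians by the angle `θ` preserves its law, so
`θ ↦ E[h(x) f(cos θ x + sin θ y)]` interpolates between `E[h f]` at `θ = 0` and `E[h] E[f]` at
`θ = π / 2`. Stein's identity evaluates the derivative of this interpolation and gives
`cov(h, f) = ∫ θ in 0..π/2, sin θ * E⟪∇ h(x), ∇ f(cos θ x + sin θ y)⟫`. Since both arguments are
again standard Gaussian, Hölder's inequality bounds the right-hand side by `‖∇ h‖_q ‖∇ f‖_p`.
For centred `f`, the choice `h = |f|^(p-2) f` turns the left-hand side into `‖f‖_p ^ p` and the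
right-hand side into at most `(p - 1) ‖f‖_p ^ (p-2) ‖∇ f‖_p ^ 2`.
-/

open ProbabilityTheory hiding stdGaussian
open scoped RealInnerProductSpace Gradient

local notation "γ" => ProbabilityTheory.stdGaussian
local notation "rot" => ContinuousLinearMap.rotation

section BoundedC1

variable {E F : Type*} [NormedAddCommGroup E] [NormedSpace ℝ E]
  [NormedAddCommGroup F] [NormedSpace ℝ F]

/-- The class `C_b^1` of continuously differentiable functions that are bounded together with their
derivative. On it every integral of the argument converges. -/
structure IsBoundedC1 (f : E → F) : Prop where
  contDiff : ContDiff ℝ 1 f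
  exists_norm_le : ∃ C, ∀ x, ‖f x‖ ≤ C
  exists_norm_fderiv_le : ∃ C, ∀ x, ‖fderiv ℝ f x‖ ≤ C

namespace IsBoundedC1

lemma differentiable {f : E → F} (hf : IsBoundedC1 f) : Differentiable ℝ f :=
  hf.contDiff.differentiable one_ne_zero

lemma continuous {f : E → F} (hf : IsBoundedC1 f) : Continuous f :=
  hf.contDiff.continuous

lemma continuous_fderiv {f : E → F} (hf : IsBoundedC1 f) : Continuous (fderiv ℝ f) :=
  hf.contDiff.continuous_fderiv one_ne_zero

lemma memLp [MeasurableSpace E] [OpensMeasurableSpace E] [SecondCountableTopology E] {f : E → F}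
    (hf : IsBoundedC1 f) (p : ℝ≥0∞) (μ : Measure E) [IsFiniteMeasure μ] : MemLp f p μ := by
  obtain ⟨C, hC⟩ := hf.exists_norm_le
  exact .of_bound hf.continuous.aestronglyMeasurable C (.of_forall hC)

lemma contDiff_comp {φ : ℝ → F} {f : E → ℝ} (hφ : ContDiff ℝ 1 φ) (hf : IsBoundedC1 f) :
    IsBoundedC1 fun x ↦ φ (f x) := by
  obtain ⟨A, hA⟩ := hf.exists_norm_le
  obtain ⟨B, hB⟩ := hf.exists_norm_fderiv_le
  have hball (x : E) : f x ∈ Metric.closedBall 0 A := mem_closedBall_zero_iff.2 (hA x)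
  obtain ⟨M, hM⟩ := (isCompact_closedBall 0 A).exists_bound_of_continuousOn
    hφ.continuous.continuousOn
  obtain ⟨M', hM'⟩ := (isCompact_closedBall 0 A).exists_bound_of_continuousOn
    (hφ.continuous_fderiv one_ne_zero).continuousOn
  refine ⟨hφ.comp hf.contDiff, ⟨M, fun x ↦ hM _ (hball x)⟩, ⟨M' * B, fun x ↦ ?_⟩⟩
  have hchain : fderiv ℝ (fun x ↦ φ (f x)) x = (fderiv ℝ φ (f x)).comp (fderiv ℝ f x) :=
    fderiv_comp x (hφ.differentiable one_ne_zero _) (hf.differentiable x)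
  calc ‖fderiv ℝ (fun x ↦ φ (f x)) x‖ ≤ ‖fderiv ℝ φ (f x)‖ * ‖fderiv ℝ f x‖ :=
        hchain ▸ ContinuousLinearMap.opNorm_comp_le _ _
    _ ≤ M' * B := mul_le_mul (hM' _ (hball x)) (hB x) (norm_nonneg _)
        ((norm_nonneg _).trans (hM' _ (hball x)))

lemma fderiv_comp_add_smul {f : E → F} (hf : IsBoundedC1 f) (a : E) (s : ℝ) (x : E) :
    fderiv ℝ (fun x ↦ f (a + s • x)) x = s • fderiv ℝ f (a + s • x) := by
  have haff : HasFDerivAt (fun x : E ↦ a + s • x) (s • ContinuousLinearMap.id ℝ E) x :=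
    ((hasFDerivAt_id x).const_smul s).const_add a
  refine ((hf.differentiable _).hasFDerivAt.comp x haff).fderiv.trans ?_
  rw [ContinuousLinearMap.comp_smul, ContinuousLinearMap.comp_id]

lemma comp_add_smul {f : E → F} (hf : IsBoundedC1 f) (a : E) (s : ℝ) :
    IsBoundedC1 fun x ↦ f (a + s • x) := by
  obtain ⟨A, hA⟩ := hf.exists_norm_le
  obtain ⟨B, hB⟩ := hf.exists_norm_fderiv_le
  refine ⟨hf.contDiff.comp (by fun_prop), ⟨A, fun x ↦ hA _⟩, ⟨‖s‖ * B, fun x ↦ ?_⟩⟩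
  rw [hf.fderiv_comp_add_smul, norm_smul]
  exact mul_le_mul_of_nonneg_left (hB _) (norm_nonneg s)

end IsBoundedC1

lemma isBoundedC1_schwartzMap (f : SchwartzMap E F) : IsBoundedC1 f :=
  ⟨f.smooth 1, ⟨_, SchwartzMap.norm_le_seminorm ℝ f⟩,
    ⟨_, SchwartzMap.norm_le_seminorm ℝ (SchwartzMap.fderivCLM ℝ E F f)⟩⟩

end BoundedC1

section Gradient

variable {E : Type*} [NormedAddCommGroup E] [InnerProductSpace ℝ E] [CompleteSpace E]

lemma norm_gradient (f : E → ℝ) (x : E) : ‖∇ f x‖ = ‖fderiv ℝ f x‖ :=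
  LinearIsometryEquiv.norm_map _ _

lemma IsBoundedC1.continuous_gradient {f : E → ℝ} (hf : IsBoundedC1 f) : Continuous (∇ f) :=
  (InnerProductSpace.toDual ℝ E).symm.continuous.comp hf.continuous_fderiv

lemma IsBoundedC1.exists_norm_gradient_le {f : E → ℝ} (hf : IsBoundedC1 f) :
    ∃ C, ∀ x, ‖∇ f x‖ ≤ C := by
  simpa only [norm_gradient] using hf.exists_norm_fderiv_le

end Gradient

section SignedPower

lemma hasDerivAt_abs_rpow_mul_self {r : ℝ} (hr : 0 ≤ r) (t : ℝ) :
    HasDerivAt (fun t : ℝ ↦ |t| ^ r * t) ((r + 1) * |t| ^ r) t := by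
  rcases eq_or_ne t 0 with rfl | ht
  · have hcont : Continuous fun t : ℝ ↦ |t| ^ r := continuous_abs.rpow_const fun _ ↦ .inr hr
    have hval : (r + 1) * |(0 : ℝ)| ^ r = |(0 : ℝ)| ^ r := by
      rcases hr.eq_or_lt with rfl | hr'
      · simp
      · simp [Real.zero_rpow hr'.ne']
    rw [hasDerivAt_iff_tendsto_slope, hval]
    refine ((hcont.tendsto 0).mono_left nhdsWithin_le_nhds).congr' ?_
    filter_upwards [self_mem_nhdsWithin] with t (ht : t ≠ 0)
    rw [slope_def_field, mul_zero, sub_zero, sub_zero, mul_div_cancel_right₀ _ ht]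
  · have habs : |t| ≠ 0 := abs_ne_zero.2 ht
    have hpow : |t| ^ r = |t| ^ (r - 1) * |t| := by
      rw [← Real.rpow_add_one habs, sub_add_cancel]
    have hsign : (SignType.sign t : ℝ) * t = |t| := by rw [mul_comm, self_mul_sign]
    refine (((hasDerivAt_abs ht).rpow_const (.inl habs)).mul (hasDerivAt_id' t)).congr_deriv ?_
    linear_combination r * |t| ^ (r - 1) * hsign - r * hpow

lemma contDiff_abs_rpow_mul_self {r : ℝ} (hr : 0 ≤ r) :
    ContDiff ℝ 1 fun t : ℝ ↦ |t| ^ r * t := by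
  refine contDiff_one_iff_deriv.2
    ⟨fun t ↦ (hasDerivAt_abs_rpow_mul_self hr t).differentiableAt, ?_⟩
  rw [funext fun t ↦ (hasDerivAt_abs_rpow_mul_self hr t).deriv]
  exact (continuous_abs.rpow_const fun _ ↦ .inr hr).const_mul _

lemma gradient_abs_rpow_mul_self {E : Type*} [NormedAddCommGroup E] [InnerProductSpace ℝ E]
    [CompleteSpace E] {f : E → ℝ} (hf : Differentiable ℝ f) {r : ℝ} (hr : 0 ≤ r) :
    ∇ (fun x ↦ |f x| ^ r * f x) = (r + 1) • fun x ↦ |f x| ^ r • ∇ f x := by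
  funext x
  have hchain : fderiv ℝ (fun x ↦ |f x| ^ r * f x) x = ((r + 1) * |f x| ^ r) • fderiv ℝ f x :=
    ((hasDerivAt_abs_rpow_mul_self hr (f x)).comp_hasFDerivAt x (hf x).hasFDerivAt).fderiv
  rw [gradient, hchain, map_smul, mul_smul]
  rfl

end SignedPower

section Lp

variable {α : Type*} [MeasurableSpace α] {μ : Measure α}

lemma eLpNorm_norm_rpow_smul_le {E F : Type*} [NormedAddCommGroup E] [NormedAddCommGroup F]
    [NormedSpace ℝ F] {f : α → E} {g : α → F} (hf : AEStronglyMeasurable f μ)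
    (hg : AEStronglyMeasurable g μ) {s : ℝ} (hs : 0 ≤ s) (p : ℝ≥0∞) :
    eLpNorm (fun x ↦ ‖f x‖ ^ s • g x) (p / ENNReal.ofReal (s + 1)) μ ≤
      eLpNorm f p μ ^ s * eLpNorm g p μ := by
  rcases hs.eq_or_lt with rfl | hs'
  · simp
  have hs₀ : ENNReal.ofReal s ≠ 0 := by simpa using hs'
  have : ENNReal.HolderTriple (p / ENNReal.ofReal s) p (p / ENNReal.ofReal (s + 1)) := ⟨by
    rw [ENNReal.inv_div (.inl ENNReal.ofReal_ne_top) (.inl hs₀),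
      ENNReal.inv_div (.inl ENNReal.ofReal_ne_top) (.inl (by simpa using by positivity)),
      ENNReal.ofReal_add hs zero_le_one, ENNReal.ofReal_one, ENNReal.add_div, one_div]⟩
  calc eLpNorm (fun x ↦ ‖f x‖ ^ s • g x) (p / ENNReal.ofReal (s + 1)) μ
      ≤ eLpNorm (fun x ↦ ‖f x‖ ^ s) (p / ENNReal.ofReal s) μ * eLpNorm g p μ :=
        eLpNorm_smul_le_mul_eLpNorm hg (hf.norm.aemeasurable.pow_const s).aestronglyMeasurable
    _ = eLpNorm f p μ ^ s * eLpNorm g p μ := by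
        rw [eLpNorm_norm_rpow f hs', ENNReal.div_mul_cancel hs₀ ENNReal.ofReal_ne_top]

lemma enorm_integral_inner_le_eLpNorm_mul_eLpNorm {E : Type*} [NormedAddCommGroup E]
    [InnerProductSpace ℝ E] {f g : α → E} (hf : AEStronglyMeasurable f μ)
    (hg : AEStronglyMeasurable g μ) (p q : ℝ≥0∞) [p.HolderConjugate q] :
    ‖∫ x, ⟪f x, g x⟫ ∂μ‖ₑ ≤ eLpNorm f p μ * eLpNorm g q μ := by
  calc ‖∫ x, ⟪f x, g x⟫ ∂μ‖ₑ ≤ ∫⁻ x, ‖⟪f x, g x⟫‖ₑ ∂μ := enorm_integral_le_lintegral_enorm _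
    _ = eLpNorm (fun x ↦ ⟪f x, g x⟫) 1 μ := eLpNorm_one_eq_lintegral_enorm.symm
    _ ≤ (1 : NNReal) * eLpNorm f p μ * eLpNorm g q μ :=
        eLpNorm_le_eLpNorm_mul_eLpNorm_of_nnnorm hf hg (inner ℝ) 1 (.of_forall fun x ↦ by
          simpa using nnnorm_inner_le_nnnorm (𝕜 := ℝ) (f x) (g x))
    _ = eLpNorm f p μ * eLpNorm g q μ := by rw [ENNReal.coe_one, one_mul]

lemma eLpNorm_rpow_eq_enorm_integral_abs_rpow_mul {f : α → ℝ} {p : ℝ}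
    (hf : MemLp f (ENNReal.ofReal p) μ) (hp : 0 < p) :
    eLpNorm f (ENNReal.ofReal p) μ ^ p = ‖∫ x, |f x| ^ (p - 2) * f x * f x ∂μ‖ₑ := by
  have hpow (t : ℝ) : |t| ^ (p - 2) * t * t = ‖t‖ ^ p := by
    rcases eq_or_ne t 0 with rfl | ht
    · simp [Real.zero_rpow hp.ne']
    · rw [mul_assoc, ← abs_mul_abs_self, ← pow_two, ← Real.rpow_natCast,
        ← Real.rpow_add (abs_pos.2 ht), Nat.cast_ofNat, sub_add_cancel, norm_eq_abs]
  have hnonneg : 0 ≤ ∫ x, ‖f x‖ ^ p ∂μ := integral_nonneg fun x ↦ by positivity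
  rw [hf.eLpNorm_eq_integral_rpow_norm (by simpa using hp) ENNReal.ofReal_ne_top,
    ENNReal.toReal_ofReal hp.le, ENNReal.ofReal_rpow_of_nonneg (by positivity) hp.le,
    Real.rpow_inv_rpow hnonneg hp.ne', ← Real.enorm_of_nonneg hnonneg]
  simp_rw [hpow]

end Lp

lemma holderConjugate_ofReal_div_ofReal_sub_one {p : ℝ} (hp : 1 < p) :
    (ENNReal.ofReal p / ENNReal.ofReal (p - 1)).HolderConjugate (ENNReal.ofReal p) := by
  rw [← ENNReal.ofReal_div_of_pos (sub_pos.2 hp)]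
  exact (Real.HolderConjugate.conjExponent hp).symm.ennrealOfReal

lemma le_ofReal_sqrt_mul_of_rpow_le {N D : ℝ≥0∞} (hN : N ≠ ∞) {c p : ℝ}
    (h : N ^ p ≤ ENNReal.ofReal c * (N ^ (p - 2) * D ^ 2)) :
    N ≤ ENNReal.ofReal √c * D := by
  rcases eq_or_ne N 0 with rfl | hN₀
  · exact zero_le
  have hsplit : N ^ p = N ^ (p - 2) * N ^ 2 := by
    rw [← ENNReal.rpow_natCast N 2, ← ENNReal.rpow_add _ _ hN₀ hN, Nat.cast_ofNat, sub_add_cancel]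
  have hsqrt : ENNReal.ofReal c = ENNReal.ofReal √c ^ 2 := by
    rw [← ENNReal.ofReal_pow (sqrt_nonneg c), sq_sqrt', ENNReal.ofReal_max,
      ENNReal.ofReal_zero, max_eq_left zero_le]
  refine (ENNReal.pow_le_pow_left_iff two_ne_zero).1 ?_
  rw [mul_pow, ← hsqrt]
  refine (ENNReal.mul_le_mul_iff_right (a := N ^ (p - 2)) ?_ ?_).1 ?_
  · simp [ENNReal.rpow_eq_zero_iff, hN₀, hN]
  · simp [ENNReal.rpow_eq_top_iff, hN₀, hN]
  · rwa [← hsplit, mul_left_comm]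

section Rotation

variable {E : Type*} [NormedAddCommGroup E] [NormedSpace ℝ E]

lemma cos_smul_rotation_fst_add_neg_sin_smul_rotation_snd (θ : ℝ) (z : E × E) :
    cos θ • (rot θ z).1 + -sin θ • (rot θ z).2 = z.1 := by
  rw [ContinuousLinearMap.rotation_apply]
  calc cos θ • (cos θ • z.1 + sin θ • z.2) + -sin θ • (-sin θ • z.1 + cos θ • z.2)
      = (cos θ ^ 2 + sin θ ^ 2) • z.1 := by module
    _ = z.1 := by rw [cos_sq_add_sin_sq, one_smul]

lemma hasDerivAt_rotation_fst (z : E × E) (θ : ℝ) :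
    HasDerivAt (fun θ ↦ (rot θ z).1) (rot θ z).2 θ := by
  simp only [ContinuousLinearMap.rotation_apply]
  exact ((hasDerivAt_cos θ).smul_const z.1).add ((hasDerivAt_sin θ).smul_const z.2)

lemma norm_rotation_snd_le (θ : ℝ) (z : E × E) :
    ‖(rot θ z).2‖ ≤ ‖z.1‖ + ‖z.2‖ := by
  simp only [ContinuousLinearMap.rotation_apply]
  refine (norm_add_le _ _).trans (add_le_add ?_ ?_) <;> rw [norm_smul]
  · rw [norm_neg]
    exact mul_le_of_le_one_left (norm_nonneg _) (abs_sin_le_one θ)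
  · exact mul_le_of_le_one_left (norm_nonneg _) (abs_cos_le_one θ)

end Rotation

section StandardGaussian

variable {E : Type*} [NormedAddCommGroup E] [InnerProductSpace ℝ E]

variable (E) in
/-- The Lebesgue density of the standard Gaussian measure on a finite-dimensional real inner
product space. -/
noncomputable def stdGaussianPDFReal (x : E) : ℝ :=
  (2 * π) ^ (-(Module.finrank ℝ E : ℝ) / 2) * Real.exp (-‖x‖ ^ 2 / 2)

lemma stdGaussianPDFReal_nonneg (x : E) : 0 ≤ stdGaussianPDFReal E x := by
  unfold stdGaussianPDFReal; positivity

lemma continuous_stdGaussianPDFReal : Continuous (stdGaussianPDFReal E) := by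
  unfold stdGaussianPDFReal; fun_prop

lemma hasFDerivAt_stdGaussianPDFReal (x : E) :
    HasFDerivAt (stdGaussianPDFReal E) (-(stdGaussianPDFReal E x • innerSL ℝ x)) x := by
  have hexp : HasFDerivAt (stdGaussianPDFReal E) _ x :=
    ((((hasStrictFDerivAt_norm_sq x).hasFDerivAt.neg).mul_const (2⁻¹ : ℝ)).exp).const_mul _
  refine hexp.congr_fderiv ?_
  ext w
  simp only [stdGaussianPDFReal, smul_apply, neg_apply, innerSL_apply_apply, smul_eq_mul,
    nsmul_eq_mul, div_eq_mul_inv, Pi.neg_apply]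
  push_cast
  ring

variable [FiniteDimensional ℝ E] [MeasurableSpace E] [BorelSpace E]

lemma integral_stdGaussianPDFReal_smul_cexp (t : E) :
    ∫ x, stdGaussianPDFReal E x • Complex.exp (⟪x, t⟫ * Complex.I) =
      Complex.exp (-(‖t‖ : ℂ) ^ 2 / 2) := by
  set c : ℝ := (2 * π) ^ (-(Module.finrank ℝ E : ℝ) / 2) with hc
  have hintegrand (x : E) : stdGaussianPDFReal E x • Complex.exp (⟪x, t⟫ * Complex.I) =
      (c : ℂ) * Complex.exp (-(1 / 2) * ‖x‖ ^ 2 + Complex.I * ⟪t, x⟫) := by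
    rw [stdGaussianPDFReal, ← hc, Complex.real_smul, real_inner_comm x t, Complex.exp_add]
    push_cast
    ring_nf
  have hnormalize : (c : ℂ) * ((π : ℂ) / (1 / 2)) ^ ((Module.finrank ℝ E : ℂ) / 2) = 1 := by
    have hcpow : ((π : ℂ) / (1 / 2)) ^ ((Module.finrank ℝ E : ℂ) / 2) =
        (((2 * π) ^ ((Module.finrank ℝ E : ℝ) / 2) : ℝ) : ℂ) := by
      rw [Complex.ofReal_cpow (by positivity), div_div_eq_mul_div, div_one, mul_comm]
      push_cast
      rfl
    rw [hcpow, hc, ← Complex.ofReal_mul, ← Real.rpow_add (by positivity), neg_div,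
      neg_add_cancel, Real.rpow_zero, Complex.ofReal_one]
  simp_rw [hintegrand]
  rw [integral_const_mul, GaussianFourier.integral_cexp_neg_mul_sq_norm_add (by norm_num),
    ← mul_assoc, hnormalize, one_mul, Complex.I_sq]
  congr 1
  ring

lemma integrable_stdGaussianPDFReal : Integrable (stdGaussianPDFReal E) := by
  have hne : ∫ x, stdGaussianPDFReal E x • Complex.exp (⟪x, (0 : E)⟫ * Complex.I) ≠ 0 := by
    rw [integral_stdGaussianPDFReal_smul_cexp]
    exact Complex.exp_ne_zero _
  refine (Integrable.of_integral_ne_zero hne).norm.congr (.of_forall fun x ↦ ?_)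
  simp [abs_of_nonneg (stdGaussianPDFReal_nonneg x)]

theorem stdGaussian_eq_withDensity :
    γ E = volume.withDensity fun x ↦ ENNReal.ofReal (stdGaussianPDFReal E x) := by
  have := isFiniteMeasure_withDensity_ofReal (integrable_stdGaussianPDFReal (E := E)).2
  refine Measure.ext_of_charFun (funext fun t ↦ ?_)
  rw [charFun_stdGaussian, charFun_apply,
    integral_withDensity_eq_integral_toReal_smul
      continuous_stdGaussianPDFReal.measurable.ennreal_ofReal (by simp)]
  simp_rw [ENNReal.toReal_ofReal (stdGaussianPDFReal_nonneg _),
    integral_stdGaussianPDFReal_smul_cexp]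

section Density

variable {F : Type*} [NormedAddCommGroup F] [NormedSpace ℝ F]

lemma integral_stdGaussian_eq_integral_smul (g : E → F) :
    ∫ x, g x ∂γ E = ∫ x, stdGaussianPDFReal E x • g x := by
  rw [stdGaussian_eq_withDensity, integral_withDensity_eq_integral_toReal_smul
    continuous_stdGaussianPDFReal.measurable.ennreal_ofReal (by simp)]
  simp_rw [ENNReal.toReal_ofReal (stdGaussianPDFReal_nonneg _)]

lemma integrable_stdGaussian_iff (g : E → F) :
    Integrable g (γ E) ↔ Integrable fun x ↦ stdGaussianPDFReal E x • g x := by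
  rw [stdGaussian_eq_withDensity, integrable_withDensity_iff_integrable_smul'
    continuous_stdGaussianPDFReal.measurable.ennreal_ofReal (by simp)]
  simp_rw [ENNReal.toReal_ofReal (stdGaussianPDFReal_nonneg _)]

end Density

lemma integrable_norm_stdGaussian : Integrable (fun x ↦ ‖x‖) (γ E) :=
  (IsGaussian.integrable_id (μ := γ E)).norm

theorem integral_mul_inner_stdGaussian {h : E → ℝ} (hh : IsBoundedC1 h) (w : E) :
    ∫ x, h x * ⟪w, x⟫ ∂γ E = ∫ x, ⟪∇ h x, w⟫ ∂γ E := by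
  obtain ⟨A, hA⟩ := hh.exists_norm_le
  obtain ⟨B, hB⟩ := hh.exists_norm_gradient_le
  have hh' := hh.continuous
  have hgrad := hh.continuous_gradient
  have hint : Integrable h (γ E) := memLp_one_iff_integrable.1 (hh.memLp 1 _)
  have hint_grad : Integrable (fun x ↦ ⟪∇ h x, w⟫) (γ E) :=
    .of_bound (by fun_prop) (B * ‖w‖) (.of_forall fun x ↦ (norm_inner_le_norm _ _).trans
      (mul_le_mul_of_nonneg_right (hB x) (norm_nonneg w)))
  have hint_inner : Integrable (fun x ↦ h x * ⟪w, x⟫) (γ E) :=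
    ((integrable_norm_stdGaussian.const_mul ‖w‖).mono' (by fun_prop)
      (.of_forall fun x ↦ norm_inner_le_norm w x)).bdd_mul (by fun_prop) (.of_forall hA)
  simp only [inner_gradient_left] at hint_grad ⊢
  simp only [integrable_stdGaussian_iff, smul_eq_mul] at hint hint_grad hint_inner
  have hpdf (x : E) : fderiv ℝ (stdGaussianPDFReal E) x w * h x =
      -(stdGaussianPDFReal E x * (h x * ⟪w, x⟫)) := by
    rw [(hasFDerivAt_stdGaussianPDFReal x).fderiv, neg_apply, smul_apply, innerSL_apply_apply,
      smul_eq_mul, real_inner_comm]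
    ring
  have hparts := integral_mul_fderiv_eq_neg_fderiv_mul_of_integrable (μ := volume)
    (hint_inner.neg.congr (.of_forall fun x ↦ (hpdf x).symm)) hint_grad hint
    (fun x _ ↦ (hasFDerivAt_stdGaussianPDFReal x).differentiableAt) fun x _ ↦ hh.differentiable x
  simp only [integral_stdGaussian_eq_integral_smul, smul_eq_mul]
  rw [hparts]
  simp_rw [hpdf, integral_neg, neg_neg]

lemma integral_comp_add_smul_mul_inner_stdGaussian {h : E → ℝ} (hh : IsBoundedC1 h) (a w : E)
    (s : ℝ) :
    ∫ x, h (a + s • x) * ⟪w, x⟫ ∂γ E = s * ∫ x, ⟪∇ h (a + s • x), w⟫ ∂γ E := by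
  rw [integral_mul_inner_stdGaussian (hh.comp_add_smul a s), ← integral_const_mul]
  simp_rw [inner_gradient_left, hh.fderiv_comp_add_smul, smul_apply, smul_eq_mul]

lemma measurePreserving_rotation_stdGaussian (θ : ℝ) :
    MeasurePreserving (rot θ) ((γ E).prod (γ E)) ((γ E).prod (γ E)) :=
  ⟨(rot θ).continuous.measurable, IsGaussian.map_rotation_eq_self (by simp) θ⟩

lemma measurePreserving_rotation_fst_stdGaussian (θ : ℝ) :
    MeasurePreserving (fun z ↦ (rot θ z).1) ((γ E).prod (γ E)) (γ E) :=
  measurePreserving_fst.comp (measurePreserving_rotation_stdGaussian θ)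

lemma integral_comp_rotation_stdGaussian {F : Type*} [NormedAddCommGroup F] [NormedSpace ℝ F]
    {G : E × E → F} (hG : Continuous G) (θ : ℝ) :
    ∫ z, G (rot θ z) ∂(γ E).prod (γ E) = ∫ z, G z ∂(γ E).prod (γ E) := by
  have hrot := measurePreserving_rotation_stdGaussian (E := E) θ
  conv_rhs => rw [← hrot.map_eq]
  exact (integral_map hrot.aemeasurable hG.aestronglyMeasurable).symm

section Covariance

variable {h f : E → ℝ}

lemma hasDerivAt_integral_mul_comp_rotation (hh : IsBoundedC1 h) (hf : IsBoundedC1 f) (θ : ℝ) :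
    HasDerivAt (fun θ ↦ ∫ z, h z.1 * f (rot θ z).1 ∂(γ E).prod (γ E))
      (∫ z, h z.1 * ⟪∇ f (rot θ z).1, (rot θ z).2⟫ ∂(γ E).prod (γ E)) θ := by
  obtain ⟨A, hA⟩ := hh.exists_norm_le
  obtain ⟨B, hB⟩ := hf.exists_norm_le
  obtain ⟨C, hC⟩ := hf.exists_norm_gradient_le
  have hC₀ : 0 ≤ C := (norm_nonneg _).trans (hC 0)
  have hhc := hh.continuous
  have hfc := hf.continuous
  have hgrad := hf.continuous_gradient
  refine (hasDerivAt_integral_of_dominated_loc_of_deriv_le (Filter.univ_mem (f := nhds θ))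
    (μ := (γ E).prod (γ E))
    (F := fun θ (z : E × E) ↦ h z.1 * f (rot θ z).1)
    (F' := fun θ z ↦ h z.1 * ⟪∇ f (rot θ z).1, (rot θ z).2⟫)
    (bound := fun z : E × E ↦ A * (C * (‖z.1‖ + ‖z.2‖))) (.of_forall fun θ ↦ ?_) ?_ ?_
    (.of_forall fun z θ _ ↦ ?_) ?_ (.of_forall fun z θ _ ↦ ?_)).2
  · exact Continuous.aestronglyMeasurable (by fun_prop)
  · refine .of_bound (Continuous.aestronglyMeasurable (by fun_prop)) (A * B)
      (.of_forall fun z ↦ ?_)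
    exact norm_mul_le_of_le (hA _) (hB _)
  · exact Continuous.aestronglyMeasurable (by fun_prop)
  · refine norm_mul_le_of_le (hA _) ((norm_inner_le_norm _ _).trans ?_)
    exact mul_le_mul (hC _) (norm_rotation_snd_le θ z) (norm_nonneg _) hC₀
  · exact (((integrable_norm_stdGaussian.comp_fst _).add
      (integrable_norm_stdGaussian.comp_snd _)).const_mul C).const_mul A
  · rw [inner_gradient_left]
    exact ((hf.differentiable _).hasFDerivAt.comp_hasDerivAt θ
      (hasDerivAt_rotation_fst z θ)).const_mul (h z.1)

lemma continuous_integral_inner_gradient_rotation (hh : IsBoundedC1 h) (hf : IsBoundedC1 f) :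
    Continuous fun θ ↦ ∫ z, ⟪∇ h z.1, ∇ f (rot θ z).1⟫ ∂(γ E).prod (γ E) := by
  obtain ⟨B, hB⟩ := hh.exists_norm_gradient_le
  obtain ⟨C, hC⟩ := hf.exists_norm_gradient_le
  have hhgrad := hh.continuous_gradient
  have hfgrad := hf.continuous_gradient
  refine continuous_of_dominated (bound := fun _ ↦ B * C)
    (fun θ ↦ Continuous.aestronglyMeasurable (by fun_prop))
    (fun θ ↦ .of_forall fun z ↦ ?_) (integrable_const _) (.of_forall fun z ↦ ?_)
  · exact (norm_inner_le_norm _ _).trans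
      (mul_le_mul (hB _) (hC _) (norm_nonneg _) ((norm_nonneg _).trans (hB 0)))
  · simp only [ContinuousLinearMap.rotation_apply]
    fun_prop

-- Rotating back by `θ` freezes the argument of `∇ f`, so Stein's identity in the second variable
-- only ever differentiates `h`.
lemma integral_mul_inner_gradient_rotation (hh : IsBoundedC1 h) (hf : IsBoundedC1 f) (θ : ℝ) :
    ∫ z, h z.1 * ⟪∇ f (rot θ z).1, (rot θ z).2⟫ ∂(γ E).prod (γ E) =
      -(sin θ * ∫ z, ⟪∇ h z.1, ∇ f (rot θ z).1⟫ ∂(γ E).prod (γ E)) := by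
  obtain ⟨A, hA⟩ := hh.exists_norm_le
  obtain ⟨B, hB⟩ := hh.exists_norm_gradient_le
  obtain ⟨C, hC⟩ := hf.exists_norm_gradient_le
  have hhc := hh.continuous
  have hhgrad := hh.continuous_gradient
  have hfgrad := hf.continuous_gradient
  have hint_left : Integrable (fun z : E × E ↦ h (cos θ • z.1 + -sin θ • z.2) * ⟪∇ f z.1, z.2⟫)
      ((γ E).prod (γ E)) := by
    refine Integrable.bdd_mul ?_ (Continuous.aestronglyMeasurable (by fun_prop))
      (.of_forall fun z ↦ hA _)
    refine ((integrable_norm_stdGaussian.comp_snd (γ E)).const_mul C).mono'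
      (Continuous.aestronglyMeasurable (by fun_prop)) (.of_forall fun z ↦ ?_)
    exact (norm_inner_le_norm _ _).trans (mul_le_mul_of_nonneg_right (hC _) (norm_nonneg _))
  have hint_right : Integrable (fun z : E × E ↦ ⟪∇ h (cos θ • z.1 + -sin θ • z.2), ∇ f z.1⟫)
      ((γ E).prod (γ E)) := by
    refine .of_bound (Continuous.aestronglyMeasurable (by fun_prop)) (B * C)
      (.of_forall fun z ↦ ?_)
    exact (norm_inner_le_norm _ _).trans
      (mul_le_mul (hB _) (hC _) (norm_nonneg _) ((norm_nonneg _).trans (hB 0)))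
  have hleft := integral_comp_rotation_stdGaussian (E := E)
    (G := fun z ↦ h (cos θ • z.1 + -sin θ • z.2) * ⟪∇ f z.1, z.2⟫) (by fun_prop) θ
  have hright := integral_comp_rotation_stdGaussian (E := E)
    (G := fun z ↦ ⟪∇ h (cos θ • z.1 + -sin θ • z.2), ∇ f z.1⟫) (by fun_prop) θ
  simp only [cos_smul_rotation_fst_add_neg_sin_smul_rotation_snd] at hleft hright
  rw [hleft, hright, integral_prod _ hint_left, integral_prod _ hint_right]
  simp_rw [integral_comp_add_smul_mul_inner_stdGaussian hh, integral_const_mul, neg_mul]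

theorem covariance_stdGaussian_eq (hh : IsBoundedC1 h) (hf : IsBoundedC1 f) :
    cov[h, f; γ E] = ∫ θ in 0..π / 2,
      sin θ * ∫ z, ⟪∇ h z.1, ∇ f (rot θ z).1⟫ ∂(γ E).prod (γ E) := by
  set F : ℝ → ℝ := fun θ ↦ ∫ z, h z.1 * f (rot θ z).1 ∂(γ E).prod (γ E) with hF
  have hderiv (θ : ℝ) : HasDerivAt F (-(sin θ *
      ∫ z, ⟪∇ h z.1, ∇ f (rot θ z).1⟫ ∂(γ E).prod (γ E))) θ :=
    integral_mul_inner_gradient_rotation hh hf θ ▸ hasDerivAt_integral_mul_comp_rotation hh hf θ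
  have hzero : F 0 = ∫ x, h x * f x ∂γ E := by
    simpa [hF, ContinuousLinearMap.rotation_apply] using
      integral_fun_fst (μ := γ E) (ν := γ E) fun x ↦ h x * f x
  have hpi : F (π / 2) = (∫ x, h x ∂γ E) * ∫ x, f x ∂γ E := by
    simpa [hF, ContinuousLinearMap.rotation_apply] using
      integral_prod_mul (μ := γ E) (ν := γ E) h f
  have hftc := intervalIntegral.integral_eq_sub_of_hasDerivAt (a := 0) (b := π / 2)
    (fun θ _ ↦ hderiv θ) (Continuous.intervalIntegrable
      (continuous_sin.mul (continuous_integral_inner_gradient_rotation hh hf)).neg _ _)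
  rw [intervalIntegral.integral_neg, hzero, hpi] at hftc
  rw [covariance_eq_sub (hh.memLp 2 _) (hf.memLp 2 _)]
  simp only [Pi.mul_apply]
  linarith

lemma enorm_integral_inner_gradient_rotation_le (hh : IsBoundedC1 h) (hf : IsBoundedC1 f)
    (q p : ℝ≥0∞) [q.HolderConjugate p] (θ : ℝ) :
    ‖∫ z, ⟪∇ h z.1, ∇ f (rot θ z).1⟫ ∂(γ E).prod (γ E)‖ₑ ≤
      eLpNorm (∇ h) q (γ E) * eLpNorm (∇ f) p (γ E) := by
  have hhgrad := hh.continuous_gradient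
  have hfgrad := hf.continuous_gradient
  calc _ ≤ eLpNorm (fun z : E × E ↦ ∇ h z.1) q ((γ E).prod (γ E)) *
          eLpNorm (fun z ↦ ∇ f (rot θ z).1) p ((γ E).prod (γ E)) :=
        enorm_integral_inner_le_eLpNorm_mul_eLpNorm
          (Continuous.aestronglyMeasurable (by fun_prop))
          (Continuous.aestronglyMeasurable (by fun_prop)) q p
    _ = eLpNorm (∇ h) q (γ E) * eLpNorm (∇ f) p (γ E) := congr_arg₂ _
        (eLpNorm_comp_measurePreserving hhgrad.aestronglyMeasurable measurePreserving_fst)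
        (eLpNorm_comp_measurePreserving hfgrad.aestronglyMeasurable
          (measurePreserving_rotation_fst_stdGaussian θ))

theorem enorm_covariance_stdGaussian_le (hh : IsBoundedC1 h) (hf : IsBoundedC1 f) (q p : ℝ≥0∞)
    [q.HolderConjugate p] :
    ‖cov[h, f; γ E]‖ₑ ≤ eLpNorm (∇ h) q (γ E) * eLpNorm (∇ f) p (γ E) := by
  set M : ℝ≥0∞ := eLpNorm (∇ h) q (γ E) * eLpNorm (∇ f) p (γ E)
  have hM_ne_top : M ≠ ∞ := by
    obtain ⟨B, hB⟩ := hh.exists_norm_gradient_le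
    obtain ⟨C, hC⟩ := hf.exists_norm_gradient_le
    exact ENNReal.mul_ne_top
      (MemLp.of_bound hh.continuous_gradient.aestronglyMeasurable B (.of_forall hB)).2.ne
      (MemLp.of_bound hf.continuous_gradient.aestronglyMeasurable C (.of_forall hC)).2.ne
  have hnorm (θ : ℝ) :
      ‖∫ z, ⟪∇ h z.1, ∇ f (rot θ z).1⟫ ∂(γ E).prod (γ E)‖ ≤ M.toReal := by
    rw [← toReal_enorm]
    exact ENNReal.toReal_mono hM_ne_top (enorm_integral_inner_gradient_rotation_le hh hf q p θ)
  have hcov : ‖cov[h, f; γ E]‖ ≤ M.toReal := by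
    rw [covariance_stdGaussian_eq hh hf]
    calc _ ≤ ∫ θ in 0..π / 2, sin θ * M.toReal := by
          refine intervalIntegral.norm_integral_le_of_norm_le (by positivity)
            (.of_forall fun θ hθ ↦ ?_) (Continuous.intervalIntegrable (by fun_prop) _ _)
          have hsin : 0 ≤ sin θ :=
            sin_nonneg_of_nonneg_of_le_pi hθ.1.le (by linarith [hθ.2, pi_pos])
          rw [norm_mul, norm_of_nonneg hsin]
          exact mul_le_mul_of_nonneg_left (hnorm θ) hsin
      _ = M.toReal := by simp [intervalIntegral.integral_mul_const]
  rw [← ofReal_norm]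
  exact ENNReal.ofReal_le_of_le_toReal hcov

end Covariance

theorem gaussian_Lp_poincare_general {f : E → ℝ} (hf : IsBoundedC1 f) (hf0 : ∫ x, f x ∂γ E = 0)
    {p : ℝ} (hp : 2 ≤ p) :
    eLpNorm f (ENNReal.ofReal p) (γ E) ≤
      ENNReal.ofReal √(p - 1) * eLpNorm (∇ f) (ENNReal.ofReal p) (γ E) := by
  set P := ENNReal.ofReal p
  set Q := P / ENNReal.ofReal (p - 1)
  have hp_sub : p - 2 + 1 = p - 1 := by ring
  have hr : 0 ≤ p - 2 := sub_nonneg.2 hp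
  have hpq : Q.HolderConjugate P := holderConjugate_ofReal_div_ofReal_sub_one (by linarith)
  have hh : IsBoundedC1 fun x ↦ |f x| ^ (p - 2) * f x :=
    .contDiff_comp (contDiff_abs_rpow_mul_self hr) hf
  have hLp := hf.memLp P (γ E)
  refine le_ofReal_sqrt_mul_of_rpow_le (p := p) hLp.2.ne ?_
  calc eLpNorm f P (γ E) ^ p
      = ‖cov[fun x ↦ |f x| ^ (p - 2) * f x, f; γ E]‖ₑ := by
        rw [covariance_eq_sub (hh.memLp 2 _) (hf.memLp 2 _), hf0, mul_zero, sub_zero,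
          eLpNorm_rpow_eq_enorm_integral_abs_rpow_mul hLp (by linarith)]
        rfl
    _ ≤ eLpNorm (∇ fun x ↦ |f x| ^ (p - 2) * f x) Q (γ E) * eLpNorm (∇ f) P (γ E) :=
        enorm_covariance_stdGaussian_le hh hf Q P
    _ = ENNReal.ofReal (p - 1) * eLpNorm (fun x ↦ ‖f x‖ ^ (p - 2) • ∇ f x) Q (γ E) *
          eLpNorm (∇ f) P (γ E) := by
        rw [gradient_abs_rpow_mul_self hf.differentiable hr, eLpNorm_const_smul,
          Real.enorm_of_nonneg (by linarith), hp_sub]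
        rfl
    _ ≤ ENNReal.ofReal (p - 1) *
          (eLpNorm f P (γ E) ^ (p - 2) * eLpNorm (∇ f) P (γ E)) * eLpNorm (∇ f) P (γ E) := by
        gcongr
        simpa only [hp_sub] using eLpNorm_norm_rpow_smul_le hf.continuous.aestronglyMeasurable
          (hf.continuous_gradient.aestronglyMeasurable (μ := γ E)) hr P
    _ = ENNReal.ofReal (p - 1) *
          (eLpNorm f P (γ E) ^ (p - 2) * eLpNorm (∇ f) P (γ E) ^ 2) := by ring

end StandardGaussian

lemma stdGaussian_eq_stdGaussian_euclideanSpace (d : ℕ) :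
    stdGaussian d = γ (EuclideanSpace ℝ (Fin d)) := by
  rw [stdGaussian_eq_withDensity]
  simp only [stdGaussian, stdGaussianPDFReal, finrank_euclideanSpace_fin]

/-- `L^p`-Poincaré inequality for the standard Gaussian measure: for `p ∈ [2, ∞)` and
Schwartz `f` with `∫ f dγ = 0`, `‖f‖_{L^p(γ)} ≤ √(p-1) ‖∇f‖_{L^p(γ)}`. -/
theorem gaussian_Lp_poincare (d : ℕ) (p : ℝ) (hp : 2 ≤ p)
    (f : SchwartzMap (EuclideanSpace ℝ (Fin d)) ℝ)
    (hf0 : ∫ x, f x ∂(stdGaussian d) = 0) :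
    eLpNorm (fun x => f x) (ENNReal.ofReal p) (stdGaussian d) ≤
      ENNReal.ofReal (Real.sqrt (p - 1)) *
        eLpNorm (fun x => ‖gradient (fun y => f y) x‖) (ENNReal.ofReal p) (stdGaussian d) := by
  rw [stdGaussian_eq_stdGaussian_euclideanSpace] at hf0 ⊢
  rw [eLpNorm_norm]
  exact gaussian_Lp_poincare_general (isBoundedC1_schwartzMap f) hf0 hp
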